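/- arXiv:2401.06502 — 2 statements merged into one kernel-verified Lean document; each statement's English description precedes it below -/
import Mathlib

section
/- Let S_b be a set of N_s distinct integers and S_c a set of L distinct integers, and let K be a positive integer with K < min(N_s, L+1). Suppose that for every choice of K distinct angles θ_1,…,θ_K ∈ [-π/2, π/2) and every x ∈ ℂ^K with all entries nonzero, the spatially smoothed matrix Y = A_{S_b}(θ)·diag(x)·A_{S_c}(θ)^T satisfies: for every φ ∈ [-π/2, π/2), the steering vector a_{S_b}(φ) lies in the column space of Y if and only if φ ∈ {θ_1,…,θ_K}. Then necessarily condition (a) holds: for every K+1 distinct angles φ_1,…,φ_{K+1} ∈ [-π/2, π/2), rank A_{S_b}(φ) = K+1; and condition (b) holds: for every K distinct angles ϑ_1,…,ϑ_K ∈ [-π/2, π/2), rank A_{S_c}(ϑ) = K. -/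
open Matrix

/-- Steering vector of a linear array with sensor positions `d` (in half-wavelength units)
at angle `θ`: entries `exp (i π d_n sin θ)`. -/
noncomputable def steer {N : ℕ} (d : Fin N → ℤ) (θ : ℝ) : Fin N → ℂ :=
  fun n => Complex.exp (Complex.I * (Real.pi : ℂ) * (d n : ℂ) * (Real.sin θ : ℂ))

/-- Array manifold matrix: the `k`-th column is the steering vector at angle `θ k`. -/
noncomputable def manifold {N K : ℕ} (d : Fin N → ℤ) (θ : Fin K → ℝ) :
    Matrix (Fin N) (Fin K) ℂ :=
  Matrix.of fun n k => steer d (θ k) n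

/-- The column space of a matrix, i.e. the range of `x ↦ M *ᵥ x`. -/
noncomputable def colSpace {m n : ℕ} (M : Matrix (Fin m) (Fin n) ℂ) :
    Submodule ℂ (Fin m → ℂ) :=
  LinearMap.range M.mulVecLin

/-- Angles are restricted to `[-π/2, π/2)`. -/
def angleDomain : Set ℝ := Set.Ico (-(Real.pi / 2)) (Real.pi / 2)

/-!
The `K` steering vectors of the sources lie in the column space of `Y` while no other steering
vector does, so no steering vector is in the span of any `K` others; hence any `K + 1` of them are
linearly independent, which is (a). For (b), complete `K` angles to `K + 1` distinct ones: by (a)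
the `K` source vectors are independent, so `Y`, whose column space contains them, has rank at least
`K`. As `Y` factors through `A_{S_c}ᵀ`, the latter has rank `K` too.
-/

lemma linearIndependent_iff_notMem_span_succAbove {𝕜 V : Type*} [DivisionRing 𝕜]
    [AddCommGroup V] [Module 𝕜 V] {n : ℕ} {v : Fin (n + 1) → V} :
    LinearIndependent 𝕜 v ↔
      ∀ j, v j ∉ Submodule.span 𝕜 (Set.range (v ∘ j.succAbove)) := by
  simp only [linearIndependent_iff_notMem_span, Set.range_comp, Fin.range_succAbove,
    Set.compl_eq_univ_sdiff]

lemma linearIndependent_comp_of_forall_succ {𝕜 V α : Type*} [Semiring 𝕜]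
    [AddCommMonoid V] [Module 𝕜 V] {n : ℕ} {Ω : Set α} (hΩ : Ω.Infinite) {a : α → V}
    (ha : ∀ φ : Fin (n + 1) → α, (∀ i, φ i ∈ Ω) → Function.Injective φ →
      LinearIndependent 𝕜 (a ∘ φ))
    {θ : Fin n → α} (hθ : ∀ k, θ k ∈ Ω) (hinj : Function.Injective θ) :
    LinearIndependent 𝕜 (a ∘ θ) := by
  obtain ⟨ω, hω, hωθ⟩ := hΩ.exists_notMem_finite (Set.finite_range θ)
  have hcons : LinearIndependent 𝕜 (a ∘ Fin.cons ω θ) :=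
    ha _ (Fin.cases hω hθ) (Fin.cons_injective_iff.2 ⟨hωθ, hinj⟩)
  exact hcons.comp Fin.succ (Fin.succ_injective n)

lemma linearIndependent_row_of_card_le_rank_mul {𝕜 m n o : Type*} [Field 𝕜] [Fintype n]
    [Fintype o] {M : Matrix m n 𝕜} {B : Matrix n o 𝕜} (h : Fintype.card n ≤ (M * B).rank) :
    LinearIndependent 𝕜 B.row := by
  rw [linearIndependent_iff_card_le_finrank_span, Set.finrank, ← B.rank_eq_finrank_span_row]
  exact h.trans (M.rank_mul_le_right B)

/-- The MUSIC criterion: among the steering vectors `a φ` with parameter `φ` in the search region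
`Ω`, those lying in the signal subspace `W` are exactly those of the sources `θ`. -/
def MusicRecovers {𝕜 V α κ : Type*} [Semiring 𝕜] [AddCommMonoid V] [Module 𝕜 V]
    (a : α → V) (Ω : Set α) (θ : κ → α) (W : Submodule 𝕜 V) : Prop :=
  ∀ φ ∈ Ω, a φ ∈ W ↔ φ ∈ Set.range θ

namespace MusicRecovers

lemma span_le {𝕜 V α κ : Type*} [Semiring 𝕜] [AddCommMonoid V] [Module 𝕜 V]
    {a : α → V} {Ω : Set α} {θ : κ → α} {W : Submodule 𝕜 V}
    (h : MusicRecovers a Ω θ W) (hθ : ∀ k, θ k ∈ Ω) :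
    Submodule.span 𝕜 (Set.range (a ∘ θ)) ≤ W :=
  Submodule.span_le.2 <| Set.range_subset_iff.2 fun k => (h _ (hθ k)).2 ⟨k, rfl⟩

lemma linearIndependent_of_forall_exists {𝕜 V α : Type*} [DivisionRing 𝕜] [AddCommGroup V]
    [Module 𝕜 V] {K : ℕ} {a : α → V} {Ω : Set α}
    (h : ∀ θ : Fin K → α, (∀ k, θ k ∈ Ω) → Function.Injective θ →
      ∃ W : Submodule 𝕜 V, MusicRecovers a Ω θ W)
    {φ : Fin (K + 1) → α} (hφ : ∀ i, φ i ∈ Ω) (hinj : Function.Injective φ) :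
    LinearIndependent 𝕜 (a ∘ φ) := by
  refine linearIndependent_iff_notMem_span_succAbove.2 fun j hj => ?_
  obtain ⟨W, hW⟩ := h (φ ∘ j.succAbove) (fun _ => hφ _)
    (hinj.comp Fin.succAbove_right_injective)
  have hmem : a (φ j) ∈ W := hW.span_le (fun _ => hφ _) hj
  obtain ⟨k, hk⟩ := (hW _ (hφ j)).1 hmem
  exact Fin.succAbove_ne j k (hinj hk)

lemma linearIndependent_row_of_mul {𝕜 α ι κ o : Type*} [Field 𝕜] [Fintype κ] [Fintype o]
    {a : α → ι → 𝕜} {Ω : Set α} {θ : κ → α} {M : Matrix ι κ 𝕜} {B : Matrix κ o 𝕜}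
    (h : MusicRecovers a Ω θ (LinearMap.range (M * B).mulVecLin)) (hθ : ∀ k, θ k ∈ Ω)
    (hli : LinearIndependent 𝕜 (a ∘ θ)) : LinearIndependent 𝕜 B.row :=
  linearIndependent_row_of_card_le_rank_mul <|
    (finrank_span_eq_card hli).symm.trans_le (Submodule.finrank_mono (h.span_le hθ))

end MusicRecovers

lemma rank_manifold_of_linearIndependent {N K : ℕ} {d : Fin N → ℤ} {θ : Fin K → ℝ}
    (h : LinearIndependent ℂ (steer d ∘ θ)) : (manifold d θ).rank = K := by
  rw [← Matrix.rank_transpose]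
  exact (LinearIndependent.rank_matrix (M := (manifold d θ)ᵀ) h).trans (Fintype.card_fin K)

lemma angleDomain_infinite : angleDomain.Infinite :=
  Set.Ico_infinite (by linarith [Real.pi_pos])

/-- The matrix `M` takes the place of `A_{S_b}(θ) · diag(x)`, and the rows of `Matrix.of (b ∘ θ)`
are the columns of `A_{S_c}(θ)`. -/
theorem stmt_1_general {𝕜 α ι o : Type*} [Field 𝕜] [Fintype o] {K : ℕ} {Ω : Set α}
    (hΩ : Ω.Infinite) (a : α → ι → 𝕜) (b : α → o → 𝕜)
    (hmusic : ∀ θ : Fin K → α, (∀ k, θ k ∈ Ω) → Function.Injective θ →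
      ∃ M : Matrix ι (Fin K) 𝕜,
        MusicRecovers a Ω θ (LinearMap.range (M * Matrix.of (b ∘ θ)).mulVecLin)) :
    (∀ φ : Fin (K + 1) → α, (∀ i, φ i ∈ Ω) → Function.Injective φ →
      LinearIndependent 𝕜 (a ∘ φ)) ∧
    (∀ ϑ : Fin K → α, (∀ i, ϑ i ∈ Ω) → Function.Injective ϑ →
      LinearIndependent 𝕜 (b ∘ ϑ)) := by
  have ha : ∀ φ : Fin (K + 1) → α, (∀ i, φ i ∈ Ω) → Function.Injective φ →
      LinearIndependent 𝕜 (a ∘ φ) := fun φ =>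
    MusicRecovers.linearIndependent_of_forall_exists fun θ hθ hinj =>
      let ⟨_, hM⟩ := hmusic θ hθ hinj
      ⟨_, hM⟩
  refine ⟨ha, fun ϑ hϑ hinj => ?_⟩
  obtain ⟨M, hM⟩ := hmusic ϑ hϑ hinj
  exact hM.linearIndependent_row_of_mul hϑ (linearIndependent_comp_of_forall_succ hΩ ha hϑ hinj)

/-- Necessity direction of Theorem 1: if for every configuration of `K` distinct DOAs and
nonzero amplitudes the column space of the spatially smoothed matrix `Y` contains the
steering vector `a_{S_b}(φ)` exactly for `φ ∈ {θ_1, …, θ_K}`, then conditions (a) and (b)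
must hold. -/
theorem stmt_1 {Ns L K : ℕ} (hKpos : 0 < K) (hKlt : K < min Ns (L + 1))
    (db : Fin Ns → ℤ) (dc : Fin L → ℤ)
    (hdb : Function.Injective db) (hdc : Function.Injective dc)
    (hmusic : ∀ θ : Fin K → ℝ, (∀ k, θ k ∈ angleDomain) → Function.Injective θ →
      ∀ x : Fin K → ℂ, (∀ k, x k ≠ 0) →
      ∀ φ ∈ angleDomain,
        (steer db φ ∈ colSpace (manifold db θ * Matrix.diagonal x * (manifold dc θ)ᵀ) ↔
          ∃ k, θ k = φ)) :
    (∀ φ : Fin (K + 1) → ℝ, (∀ i, φ i ∈ angleDomain) → Function.Injective φ →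
      (manifold db φ).rank = K + 1) ∧
    (∀ ϑ : Fin K → ℝ, (∀ i, ϑ i ∈ angleDomain) → Function.Injective ϑ →
      (manifold dc ϑ).rank = K) := by
  obtain ⟨ha, hb⟩ := stmt_1_general angleDomain_infinite (steer db) (steer dc)
    fun θ hθ hinj => ⟨_, hmusic θ hθ hinj 1 fun _ => one_ne_zero⟩
  exact ⟨fun φ hφ hinj => rank_manifold_of_linearIndependent (ha φ hφ hinj),
    fun ϑ hϑ hinj => rank_manifold_of_linearIndependent (hb ϑ hϑ hinj)⟩
end

section
/- Let d_1, d_2 be positive integers with d_1 < d_2 and gcd(d_1, d_2) = 1, and let S_c be any finite set of distinct integers with {0, d_1, d_2} ⊆ S_c. Then condition (b) holds for K = 2: for every pair of distinct angles ϑ_1, ϑ_2 ∈ [-π/2, π/2), the manifold matrix A_{S_c}(ϑ) ∈ ℂ^{|S_c|×2} has rank 2. -/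
open Matrix

/-!
The steering vector at `θ` has entries `z ^ d n`, where `z = exp (iπ sin θ)`. If the vectors
`z ^ d n` and `w ^ d n` are proportional, then `(w / z) ^ d n` does not depend on `n`, so
`(w / z) ^ m = 1` for every difference `m` of two sensor positions. Once these differences generate
`ℤ`, which by Bézout is the case when `0, d₁, d₂` are among the positions, this forces `z = w`.
Finally `θ ↦ exp (iπ sin θ)` is injective on `[-π/2, π/2)`, because there `π sin θ` ranges over the
half-open interval `[-π, π)` of length `2π`.
-/

open scoped Pointwise

theorem closure_sub_self_eq_top_of_isCoprime {s : Set ℤ} {a b : ℤ} (h0 : 0 ∈ s) (ha : a ∈ s)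
    (hb : b ∈ s) (hab : IsCoprime a b) : AddSubgroup.closure (s - s) = ⊤ := by
  have hpair : AddSubgroup.closure {a, b} = ⊤ := by
    rw [Int.closure_eq_zmultiples, Int.isCoprime_iff_gcd_eq_one.mp hab, Nat.cast_one,
      Int.zmultiples_one]
  have hsub : {a, b} ⊆ s - s := by
    rintro m (rfl | rfl)
    · exact ⟨m, ha, 0, h0, sub_zero m⟩
    · exact ⟨m, hb, 0, h0, sub_zero m⟩
  exact top_unique (hpair ▸ AddSubgroup.closure_mono hsub)

theorem eq_one_of_zpow_eq_one_of_closure_eq_top {G : Type*} [Group G] {g : G} {s : Set ℤ}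
    (hs : AddSubgroup.closure s = ⊤) (hg : ∀ m ∈ s, g ^ m = 1) : g = 1 := by
  have hle : AddSubgroup.closure s ≤ AddSubgroup.zmultiples (orderOf g : ℤ) :=
    (AddSubgroup.closure_le _).mpr fun m hm =>
      Int.mem_zmultiples_iff.mpr (orderOf_dvd_iff_zpow_eq_one.mpr (hg m hm))
  have hone : (1 : ℤ) ∈ AddSubgroup.zmultiples (orderOf g : ℤ) := hle (hs ▸ AddSubgroup.mem_top 1)
  simpa only [zpow_one] using orderOf_dvd_iff_zpow_eq_one.mp (Int.mem_zmultiples_iff.mp hone)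

theorem linearIndependent_zpow_pair {ι K : Type*} [Field K] {d : ι → ℤ}
    (hd : AddSubgroup.closure (Set.range d - Set.range d) = ⊤) {z w : Kˣ} (hzw : z ≠ w) :
    LinearIndependent K ![fun i => (z : K) ^ d i, fun i => (w : K) ^ d i] := by
  have hne : Nonempty ι := by
    by_contra! hι
    rw [Set.range_eq_empty, Set.empty_sub, AddSubgroup.closure_empty] at hd
    exact bot_ne_top hd
  have hz : (fun i => (z : K) ^ d i) ≠ 0 :=
    Function.ne_iff.mpr ⟨hne.some, zpow_ne_zero _ z.ne_zero⟩
  rw [LinearIndependent.pair_iff' hz]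
  intro c hc
  have hratio (i : ι) : (((w / z) ^ d i : Kˣ) : K) = c := by
    have hci : c * (z : K) ^ d i = (w : K) ^ d i := congrFun hc i
    rw [div_zpow, Units.val_div_eq_div_val, Units.val_zpow_eq_zpow_val,
      Units.val_zpow_eq_zpow_val, ← hci, mul_div_cancel_right₀ _ (zpow_ne_zero _ z.ne_zero)]
  have hdiff : ∀ m ∈ Set.range d - Set.range d, (w / z) ^ m = 1 := by
    rintro _ ⟨_, ⟨i, rfl⟩, _, ⟨j, rfl⟩, rfl⟩
    rw [_root_.zpow_sub, mul_inv_eq_one]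
    exact Units.ext ((hratio i).trans (hratio j).symm)
  exact hzw (div_eq_one.mp (eq_one_of_zpow_eq_one_of_closure_eq_top hd hdiff)).symm

/-- The phase shift `exp (iπ sin θ)` between sensors half a wavelength apart, for a signal
arriving at angle `θ`, as an element of the unit circle. -/
noncomputable def phaseShift (θ : ℝ) : Circle :=
  Circle.exp (Real.pi * Real.sin θ)

theorem sin_mem_Ico_of_mem_angleDomain {θ : ℝ} (hθ : θ ∈ angleDomain) :
    Real.sin θ ∈ Set.Ico (-1) 1 := by
  refine ⟨Real.neg_one_le_sin θ, ?_⟩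
  rw [← Real.sin_pi_div_two]
  exact Real.sin_lt_sin_of_lt_of_le_pi_div_two hθ.1 le_rfl hθ.2

theorem injOn_phaseShift : Set.InjOn phaseShift angleDomain := by
  have hmaps : Set.MapsTo (fun θ => Real.pi * Real.sin θ) angleDomain
      (Set.Ico (-Real.pi) Real.pi) := fun θ hθ => by
    obtain ⟨hlow, hupp⟩ := sin_mem_Ico_of_mem_angleDomain hθ
    rw [← mul_neg_one Real.pi]
    exact ⟨mul_le_mul_of_nonneg_left hlow Real.pi_nonneg, mul_lt_of_lt_one_right Real.pi_pos hupp⟩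
  have hinj : Set.InjOn (fun θ => Real.pi * Real.sin θ) angleDomain :=
    (mul_right_injective₀ Real.pi_ne_zero).comp_injOn
      (Real.injOn_sin.mono Set.Ico_subset_Icc_self)
  exact (Circle.exp_injOn_Ico (by linarith)).comp hinj hmaps

theorem steer_apply {N : ℕ} (d : Fin N → ℤ) (θ : ℝ) (n : Fin N) :
    steer d θ n = (phaseShift θ : ℂ) ^ d n := by
  rw [steer, phaseShift, ← Circle.coe_zpow, ← Circle.exp_intCast_mul, Circle.coe_exp]
  push_cast
  ring_nf

theorem linearIndependent_steer_pair {N : ℕ} {d : Fin N → ℤ}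
    (hd : AddSubgroup.closure (Set.range d - Set.range d) = ⊤) {θ φ : ℝ} (hθ : θ ∈ angleDomain)
    (hφ : φ ∈ angleDomain) (hne : θ ≠ φ) : LinearIndependent ℂ ![steer d θ, steer d φ] := by
  have hphase : Circle.toUnits (phaseShift θ) ≠ Circle.toUnits (phaseShift φ) := fun h =>
    hne (injOn_phaseShift hθ hφ (Circle.ext (congrArg Units.val h)))
  have hsteer (ψ : ℝ) : steer d ψ = fun n => (Circle.toUnits (phaseShift ψ) : ℂ) ^ d n :=
    funext (steer_apply d ψ)
  rw [hsteer θ, hsteer φ]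
  exact linearIndependent_zpow_pair hd hphase

theorem stmt_10_general {N : ℕ} {d : Fin N → ℤ}
    (hd : AddSubgroup.closure (Set.range d - Set.range d) = ⊤) {ϑ : Fin 2 → ℝ}
    (hϑ : ∀ k, ϑ k ∈ angleDomain) (hinj : Function.Injective ϑ) : (manifold d ϑ).rank = 2 := by
  have hcol : (manifold d ϑ).col = ![steer d (ϑ 0), steer d (ϑ 1)] := by
    ext k n
    fin_cases k <;> rfl
  have hindep : LinearIndependent ℂ (manifold d ϑ).col :=
    hcol ▸ linearIndependent_steer_pair hd (hϑ 0) (hϑ 1) (hinj.ne zero_ne_one)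
  rw [Matrix.rank_eq_finrank_span_cols, finrank_span_eq_card hindep, Fintype.card_fin]

/-- If the array `S_c` contains `{0, d₁, d₂}` with `0 < d₁ < d₂` coprime, then condition
(b) holds for `K = 2`: the manifold matrix on any two distinct angles in `[-π/2, π/2)`
has full column rank `2`. -/
theorem stmt_10 {L : ℕ} (d₁ d₂ : ℕ) (h1 : 0 < d₁) (h12 : d₁ < d₂)
    (hgcd : Nat.gcd d₁ d₂ = 1)
    (dc : Fin L → ℤ) (hdc : Function.Injective dc)
    (h0 : (0 : ℤ) ∈ Set.range dc) (hd1 : (d₁ : ℤ) ∈ Set.range dc)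
    (hd2 : (d₂ : ℤ) ∈ Set.range dc) :
    ∀ ϑ : Fin 2 → ℝ, (∀ k, ϑ k ∈ angleDomain) → Function.Injective ϑ →
      (manifold dc ϑ).rank = 2 := by
  intro ϑ hϑ hinj
  have hcop : IsCoprime (d₁ : ℤ) d₂ := Nat.isCoprime_iff_coprime.mpr hgcd
  exact stmt_10_general (closure_sub_self_eq_top_of_isCoprime h0 hd1 hd2 hcop) hϑ hinj
end
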